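/- Fix integers 1 ≤ p < n. The polynomials D_I with I ranging over all PBW tuples form a sagbi basis of the Plücker algebra 𝒫 with respect to the monomial order <_pbw; equivalently, the initial subalgebra in_{<_pbw}(𝒫) is generated by the monomials in_{<_pbw}(D_I) = z_{1,α₁}⋯z_{p,α_p} for PBW tuples I = (α₁,…,α_p). -/

import Mathlib

open scoped Classical

noncomputable section

open MvPolynomial

/-- The initial (leading) term of `f` with respect to the strict monomial order `lt`:
the term of `f` whose monomial is `lt`-maximal in the support (or `0` if none exists). -/
def initTerm {σ : Type*} (lt : (σ →₀ ℕ) → (σ →₀ ℕ) → Prop)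
    (f : MvPolynomial σ ℂ) : MvPolynomial σ ℂ :=
  if h : ∃ m, m ∈ f.support ∧ ∀ m' ∈ f.support, m' ≠ m → lt m' m
  then monomial h.choose (coeff h.choose f)
  else 0

/-- The initial subalgebra of `A` (as a ℂ-submodule): the span of the
initial terms of elements of `A`. -/
def initSpan {σ : Type*} (lt : (σ →₀ ℕ) → (σ →₀ ℕ) → Prop)
    (A : Subalgebra ℂ (MvPolynomial σ ℂ)) : Submodule ℂ (MvPolynomial σ ℂ) :=
  Submodule.span ℂ (initTerm lt '' (A : Set (MvPolynomial σ ℂ)))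

/-- The degree reverse lexicographic order on monomials, where the variables are
enumerated according to `rank`: `a < b` iff `deg a < deg b`, or the degrees agree and
at the last (highest-rank) variable where `a` and `b` differ, `a` has the larger exponent. -/
def degRevLex {σ : Type*} (rank : σ → ℕ) (a b : σ →₀ ℕ) : Prop :=
  (a.sum fun _ e => e) < (b.sum fun _ e => e) ∨
    ((a.sum fun _ e => e) = (b.sum fun _ e => e) ∧
      ∃ i, b i < a i ∧ ∀ j, rank i < rank j → a j = b j)
/-- The Plücker minor `D_I`: the determinant of the `p×p` matrix whose `j`-th column
is the `α j`-th column of the generic `p×n` matrix of variables `z_{i,j}`. -/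
def Dmin (p n : ℕ) (α : Fin p → Fin n) : MvPolynomial (Fin p × Fin n) ℂ :=
  (Matrix.of fun i j : Fin p => (X (i, α j) : MvPolynomial (Fin p × Fin n) ℂ)).det

/-- The Plücker algebra `𝒫`: the subalgebra generated by all minors `D_I`. -/
def Pluecker (p n : ℕ) : Subalgebra ℂ (MvPolynomial (Fin p × Fin n) ℂ) :=
  Algebra.adjoin ℂ (Set.range (Dmin p n))

/-- `α` is a PBW tuple (0-indexed version): the entries are pairwise distinct, entries
`< p` stand at the position equal to their value, and entries `≥ p` appear in
decreasing order. -/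
def IsPBW (p n : ℕ) (α : Fin p → Fin n) : Prop :=
  Function.Injective α ∧ (∀ j : Fin p, (α j : ℕ) < p → (α j : ℕ) = (j : ℕ)) ∧
    ∀ j k : Fin p, p ≤ (α k : ℕ) → (α k : ℕ) < (α j : ℕ) → j < k

/-- The position of the variable `z_{i,j}` in the PBW ordering of the variables: first
by row, then cyclically within the `i`-th row starting with `z_{i,i}`. -/
def rankPBW (p n : ℕ) (x : Fin p × Fin n) : ℕ :=
  (x.1 : ℕ) * n + ((x.2 : ℕ) + n - (x.1 : ℕ)) % n


section DegRevLex

variable {σ : Type*} {rank : σ → ℕ}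

theorem degRevLex_irrefl (a : σ →₀ ℕ) : ¬ degRevLex rank a a := by
  rintro (h | ⟨-, i, hi, -⟩)
  · exact lt_irrefl _ h
  · exact lt_irrefl _ hi

theorem degRevLex_trans (hr : Function.Injective rank) {a b c : σ →₀ ℕ}
    (hab : degRevLex rank a b) (hbc : degRevLex rank b c) : degRevLex rank a c := by
  rcases hab with hab | ⟨hab, i, hi, hi'⟩ <;> rcases hbc with hbc | ⟨hbc, j, hj, hj'⟩
  · exact Or.inl (hab.trans hbc)
  · exact Or.inl (hab.trans_eq hbc)
  · exact Or.inl (hab.trans_lt hbc)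
  · refine Or.inr ⟨hab.trans hbc, ?_⟩
    rcases lt_trichotomy (rank i) (rank j) with h | h | h
    · exact ⟨j, by rw [hi' j h]; exact hj, fun k hk => (hi' k (h.trans hk)).trans (hj' k hk)⟩
    · obtain rfl := hr h
      exact ⟨i, hj.trans hi, fun k hk => (hi' k hk).trans (hj' k hk)⟩
    · exact ⟨i, by rw [← hj' i h]; exact hi, fun k hk => (hi' k hk).trans (hj' k (h.trans hk))⟩

theorem degRevLex_total {a b : σ →₀ ℕ} (hab : a ≠ b) :
    degRevLex rank a b ∨ degRevLex rank b a := by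
  rcases lt_trichotomy (a.sum fun _ e => e) (b.sum fun _ e => e) with h | h | h
  · exact Or.inl (Or.inl h)
  · have hne : ((a.support ∪ b.support).filter fun i => a i ≠ b i).Nonempty := by
      obtain ⟨i, hi⟩ := Finsupp.ne_iff.1 hab
      refine ⟨i, ?_⟩
      simp only [Finset.mem_filter, Finset.mem_union, Finsupp.mem_support_iff]
      refine ⟨?_, hi⟩
      by_contra! h
      exact hi (h.1.trans h.2.symm)
    obtain ⟨i, hi, hmax⟩ := Finset.exists_max_image _ rank hne
    have hagree : ∀ j, rank i < rank j → a j = b j := by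
      intro j hj
      by_contra hne
      refine absurd (hmax j ?_) (not_le.2 hj)
      simp only [Finset.mem_filter, Finset.mem_union, Finsupp.mem_support_iff]
      refine ⟨?_, hne⟩
      by_contra! h
      exact hne (h.1.trans h.2.symm)
    rcases lt_or_gt_of_ne (Finset.mem_filter.1 hi).2 with h' | h'
    · exact Or.inr (Or.inr ⟨h.symm, i, h', fun j hj => (hagree j hj).symm⟩)
    · exact Or.inl (Or.inr ⟨h, i, h', hagree⟩)
  · exact Or.inr (Or.inl h)

theorem degRevLex_add_right {a b : σ →₀ ℕ} (c : σ →₀ ℕ) (hab : degRevLex rank a b) :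
    degRevLex rank (a + c) (b + c) := by
  have hsum : ∀ x : σ →₀ ℕ, ((x + c).sum fun _ e => e) =
      (x.sum fun _ e => e) + (c.sum fun _ e => e) := fun x =>
    Finsupp.sum_add_index' (fun _ => rfl) (fun _ _ _ => rfl)
  unfold degRevLex
  rw [hsum, hsum]
  rcases hab with h | ⟨h, i, hi, hi'⟩
  · exact Or.inl (by omega)
  · exact Or.inr ⟨by omega, i, by simpa using hi, fun j hj => by simp [hi' j hj]⟩

/-- `m` is the leading monomial of `f`. -/
def IsLead (rank : σ → ℕ) (f : MvPolynomial σ ℂ) (m : σ →₀ ℕ) : Prop :=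
  m ∈ f.support ∧ ∀ m' ∈ f.support, m' ≠ m → degRevLex rank m' m

theorem IsLead.initTerm_eq (hr : Function.Injective rank) {f : MvPolynomial σ ℂ} {m : σ →₀ ℕ}
    (h : IsLead rank f m) : initTerm (degRevLex rank) f = monomial m (coeff m f) := by
  have hex : ∃ m, m ∈ f.support ∧ ∀ m' ∈ f.support, m' ≠ m → degRevLex rank m' m := ⟨m, h⟩
  have huniq : hex.choose = m := by
    by_contra hne
    exact degRevLex_irrefl m (degRevLex_trans hr
      (hex.choose_spec.2 m h.1 (Ne.symm hne)) (h.2 _ hex.choose_spec.1 hne))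
  rw [initTerm, dif_pos hex, huniq]

theorem initTerm_zero : initTerm (degRevLex rank) (0 : MvPolynomial σ ℂ) = 0 := by
  rw [initTerm, dif_neg]
  rintro ⟨m, hm, -⟩
  simp at hm

theorem degRevLex_add (hr : Function.Injective rank) {a b a' b' : σ →₀ ℕ}
    (ha : a' ≠ a → degRevLex rank a' a) (hb : b' ≠ b → degRevLex rank b' b)
    (hne : ¬ (a' = a ∧ b' = b)) : degRevLex rank (a' + b') (a + b) := by
  by_cases h : a' = a
  · have hb' := hb fun h' => hne ⟨h, h'⟩
    rw [h, add_comm a, add_comm a]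
    exact degRevLex_add_right a hb'
  · have h1 := degRevLex_add_right b' (ha h)
    by_cases h' : b' = b
    · rwa [h'] at h1 ⊢
    · refine degRevLex_trans hr h1 ?_
      rw [add_comm a, add_comm a]
      exact degRevLex_add_right a (hb h')

theorem IsLead.coeff_mul (hr : Function.Injective rank) {f g : MvPolynomial σ ℂ}
    {a b : σ →₀ ℕ} (hf : IsLead rank f a) (hg : IsLead rank g b) :
    coeff (a + b) (f * g) = coeff a f * coeff b g := by
  rw [MvPolynomial.coeff_mul, Finset.sum_eq_single (a, b)]
  · rintro ⟨a', b'⟩ h hne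
    by_contra h0
    have ha' : a' ∈ f.support := mem_support_iff.2 (left_ne_zero_of_mul h0)
    have hb' : b' ∈ g.support := mem_support_iff.2 (right_ne_zero_of_mul h0)
    have := degRevLex_add hr (hf.2 a' ha') (hg.2 b' hb') fun h => hne (Prod.ext h.1 h.2)
    rw [Finset.HasAntidiagonal.mem_antidiagonal.1 h] at this
    exact degRevLex_irrefl _ this
  · intro h
    simp at h

theorem IsLead.mul (hr : Function.Injective rank) {f g : MvPolynomial σ ℂ} {a b : σ →₀ ℕ}
    (hf : IsLead rank f a) (hg : IsLead rank g b) : IsLead rank (f * g) (a + b) := by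
  refine ⟨?_, fun m hm hne => ?_⟩
  · rw [mem_support_iff, hf.coeff_mul hr hg]
    exact mul_ne_zero (mem_support_iff.1 hf.1) (mem_support_iff.1 hg.1)
  · obtain ⟨a', ha', b', hb', rfl⟩ := Finset.mem_add.1 (support_mul f g hm)
    exact degRevLex_add hr (hf.2 a' ha') (hg.2 b' hb') fun h => hne (by rw [h.1, h.2])

theorem isLead_one : IsLead rank (1 : MvPolynomial σ ℂ) 0 := by
  refine ⟨by simp, fun m hm hne => ?_⟩
  rw [mem_support_iff, MvPolynomial.coeff_one, if_neg (Ne.symm hne)] at hm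
  exact absurd rfl hm

theorem IsLead.prod (hr : Function.Injective rank) {ι : Type*} (s : Finset ι)
    {f : ι → MvPolynomial σ ℂ} {a : ι → σ →₀ ℕ} (h : ∀ i ∈ s, IsLead rank (f i) (a i)) :
    IsLead rank (∏ i ∈ s, f i) (∑ i ∈ s, a i) := by
  induction s using Finset.induction_on with
  | empty => simpa using isLead_one
  | insert i s hi ih =>
    rw [Finset.prod_insert hi, Finset.sum_insert hi]
    exact (h i (Finset.mem_insert_self i s)).mul hr
      (ih fun j hj => h j (Finset.mem_insert_of_mem hj))

/-- A nonzero combination of polynomials with pairwise distinct leading monomials has one of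
these as its leading monomial. -/
theorem IsLead.linearCombination (hr : Function.Injective rank) {ι : Type*}
    {f : ι → MvPolynomial σ ℂ} {a : ι → σ →₀ ℕ} (h : ∀ i, IsLead rank (f i) (a i))
    (ha : Function.Injective a) {c : ι →₀ ℂ} (hc : c ≠ 0) :
    ∃ i, IsLead rank (Finsupp.linearCombination ℂ f c) (a i) := by
  have hmax : ∀ s : Finset ι, s.Nonempty →
      ∃ i ∈ s, ∀ j ∈ s, j ≠ i → degRevLex rank (a j) (a i) := by
    intro s hs
    induction hs using Finset.Nonempty.cons_induction with
    | singleton i => exact ⟨i, by simp, by simp⟩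
    | cons i s hi hs ih =>
      obtain ⟨j, hj, hj'⟩ := ih
      have hij : i ≠ j := fun h => hi (h ▸ hj)
      rcases degRevLex_total (rank := rank) (ha.ne hij) with hlt | hlt
      · refine ⟨j, by simp [hj], fun k hk hkj => ?_⟩
        rcases Finset.mem_cons.1 hk with rfl | hk
        · exact hlt
        · exact hj' k hk hkj
      · refine ⟨i, by simp, fun k hk hki => ?_⟩
        have hk := (Finset.mem_cons.1 hk).resolve_left hki
        by_cases hkj : k = j
        · rwa [hkj]
        · exact degRevLex_trans hr (hj' k hk hkj) hlt
  obtain ⟨i, hi, hi'⟩ := hmax c.support (Finsupp.support_nonempty_iff.2 hc)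
  have hlow : ∀ j ∈ c.support, j ≠ i → ∀ m ∈ (f j).support, degRevLex rank m (a i) := by
    intro j hj hji m hm
    by_cases hmj : m = a j
    · exact hmj ▸ hi' j hj hji
    · exact degRevLex_trans hr ((h j).2 m hm hmj) (hi' j hj hji)
  have hcoeff : ∀ m, coeff m (Finsupp.linearCombination ℂ f c) =
      ∑ j ∈ c.support, c j * coeff m (f j) := by
    intro m
    simp [Finsupp.linearCombination_apply, Finsupp.sum, coeff_sum, coeff_smul]
  refine ⟨i, ?_, fun m hm hne => ?_⟩
  · rw [mem_support_iff, hcoeff, Finset.sum_eq_single i]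
    · exact mul_ne_zero (Finsupp.mem_support_iff.1 hi) (mem_support_iff.1 (h i).1)
    · intro j hj hji
      by_contra h0
      exact degRevLex_irrefl _
        (hlow j hj hji _ (mem_support_iff.2 (right_ne_zero_of_mul h0)))
    · exact fun h => absurd hi h
  · rw [mem_support_iff, hcoeff] at hm
    obtain ⟨j, hj, hj0⟩ := Finset.exists_ne_zero_of_sum_ne_zero hm
    have hmj := mem_support_iff.2 (right_ne_zero_of_mul hj0)
    by_cases hji : j = i
    · exact (h i).2 m (hji ▸ hmj) hne
    · exact hlow j hj hji m hmj

theorem linearIndependent_of_isLead (hr : Function.Injective rank) {ι : Type*}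
    {f : ι → MvPolynomial σ ℂ} {a : ι → σ →₀ ℕ} (h : ∀ i, IsLead rank (f i) (a i))
    (ha : Function.Injective a) : LinearIndependent ℂ f := by
  rw [linearIndependent_iff]
  intro c hc
  by_contra hne
  obtain ⟨i, hi⟩ := IsLead.linearCombination hr h ha hne
  have := hi.1
  simp [hc] at this

end DegRevLex

section LeadingTerm

variable {p n : ℕ}

theorem rankPBW_injective (hpn : p < n) : Function.Injective (rankPBW p n) := by
  rintro ⟨i, j⟩ ⟨i', j'⟩ h
  have hn : 0 < n := by omega
  have key : ∀ (i : Fin p) (j : Fin n), rankPBW p n (i, j) / n = i ∧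
      rankPBW p n (i, j) % n = ((j : ℕ) + n - i) % n := by
    intro i j
    have hlt : ((j : ℕ) + n - i) % n < n := Nat.mod_lt _ hn
    constructor
    · rw [rankPBW, mul_comm, Nat.mul_add_div hn, Nat.div_eq_of_lt hlt, add_zero]
    · rw [rankPBW, mul_comm, Nat.mul_add_mod, Nat.mod_mod]
  have hi : i = i' := Fin.ext (by rw [← (key i j).1, ← (key i' j').1, h])
  subst hi
  have hm : ((j : ℕ) + n - i) % n = ((j' : ℕ) + n - i) % n := by
    rw [← (key i j).2, ← (key i j').2, h]
  have hj : (j : ℕ) = j' := by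
    have hmod : ((j : ℕ) + n - i) + i ≡ ((j' : ℕ) + n - i) + i [MOD n] :=
      Nat.ModEq.add_right _ hm
    rw [Nat.sub_add_cancel (by omega), Nat.sub_add_cancel (by omega)] at hmod
    have := Nat.ModEq.add_right_cancel' _ hmod
    rwa [Nat.ModEq, Nat.mod_eq_of_lt j.2, Nat.mod_eq_of_lt j'.2] at this
  rw [Fin.ext hj]

/-- The exponent of the monomial `∏ z_{τ(j), α_j}`. -/
def permExp (α : Fin p → Fin n) (τ : Equiv.Perm (Fin p)) : Fin p × Fin n →₀ ℕ :=
  ∑ j, Finsupp.single (τ j, α j) 1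

theorem permExp_apply (α : Fin p → Fin n) (τ : Equiv.Perm (Fin p)) (i : Fin p) (x : Fin n) :
    permExp α τ (i, x) = if α (τ.symm i) = x then 1 else 0 := by
  rw [permExp, Finsupp.finsetSum_apply, Finset.sum_eq_single (τ.symm i)]
  · simp [Finsupp.single_apply]
  · intro j _ hj
    rw [Finsupp.single_apply, if_neg]
    intro h
    exact hj (τ.eq_symm_apply.2 (Prod.ext_iff.1 h).1)
  · simp

theorem permExp_degree (α : Fin p → Fin n) (τ : Equiv.Perm (Fin p)) :
    ((permExp α τ).sum fun _ e => e) = p := by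
  have := map_sum (Finsupp.degree (R := ℕ)) (fun j => Finsupp.single (τ j, α j) 1) Finset.univ
  change Finsupp.degree (permExp α τ) = p
  rw [permExp, this]
  simp

theorem rankPBW_lt_of_row_lt {i i' : Fin p} (h : i < i') (x x' : Fin n) :
    rankPBW p n (i, x) < rankPBW p n (i', x') := by
  have hn : 0 < n := x.pos
  have hlt : ((x : ℕ) + n - i) % n < n := Nat.mod_lt _ hn
  have h' : ((i : ℕ) + 1) * n ≤ i' * n := Nat.mul_le_mul_right n h
  rw [add_one_mul] at h'
  simp only [rankPBW]
  omega

theorem rankPBW_lt_of_isPBW {α : Fin p → Fin n} (hα : IsPBW p n α) {k i : Fin p}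
    (hki : k < i) : rankPBW p n (i, α i) < rankPBW p n (i, α k) := by
  obtain ⟨hinj, hsmall, hlarge⟩ := hα
  have hi := i.2
  have hki' : (k : ℕ) < i := hki
  have hne : (α k : ℕ) ≠ α i := fun h => hki.ne (hinj (Fin.ext h))
  have hbig : ∀ y : ℕ, (i : ℕ) ≤ y → y < n → (y + n - i) % n = y - i := by
    intro y h1 h2
    rw [show y + n - i = (y - i) + n by omega, Nat.add_mod_right, Nat.mod_eq_of_lt (by omega)]
  simp only [rankPBW, add_lt_add_iff_left]
  have hαk := (α k).2
  have hαi := (α i).2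
  have hi_le : (i : ℕ) ≤ α i := by
    by_cases h : (α i : ℕ) < p
    · rw [hsmall i h]
    · omega
  rw [hbig _ hi_le hαi]
  by_cases hk : (α k : ℕ) < p
  · have := hsmall k hk
    rw [Nat.mod_eq_of_lt (by omega)]
    omega
  · rw [hbig _ (by omega) hαk]
    by_cases h : (α i : ℕ) < p
    · have := hsmall i h
      omega
    · have : ¬ (α k : ℕ) < α i := fun h' => absurd (hlarge i k (by omega) h') (by omega)
      omega

theorem permExp_lt_of_isPBW {α : Fin p → Fin n} (hα : IsPBW p n α)
    {τ : Equiv.Perm (Fin p)} (hτ : τ ≠ 1) :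
    degRevLex (rankPBW p n) (permExp α τ) (permExp α 1) := by
  refine Or.inr ⟨by rw [permExp_degree, permExp_degree], ?_⟩
  have hne : (Finset.univ.filter fun i => τ.symm i ≠ i).Nonempty := by
    by_contra h
    rw [Finset.not_nonempty_iff_eq_empty, Finset.filter_eq_empty_iff] at h
    refine hτ (Equiv.ext fun i => ?_)
    have := not_not.1 (h (Finset.mem_univ i))
    rw [Equiv.Perm.one_apply]
    exact (Equiv.symm_apply_eq τ).1 this |>.symm
  obtain ⟨i, hi, hmax⟩ := Finset.exists_max_image _ id hne
  have hi : τ.symm i ≠ i := (Finset.mem_filter.1 hi).2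
  have hfix : ∀ j, i < j → τ.symm j = j := by
    intro j hj
    by_contra h
    exact absurd (hmax j (Finset.mem_filter.2 ⟨Finset.mem_univ j, h⟩)) (not_le.2 hj)
  have hlt : τ.symm i < i := by
    refine lt_of_le_of_ne (not_lt.1 fun h => ?_) hi
    exact hi (τ.symm.injective (hfix _ h))
  have hrank := rankPBW_lt_of_isPBW hα hlt
  refine ⟨(i, α (τ.symm i)), ?_, ?_⟩
  · rw [permExp_apply, permExp_apply, if_pos rfl, if_neg]
    · exact one_pos
    · exact fun h => hlt.ne' (hα.1 h)
  · rintro ⟨j, x⟩ hjx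
    rw [permExp_apply, permExp_apply]
    rcases lt_trichotomy i j with h | rfl | h
    · rw [hfix j h]
      rfl
    · rw [if_neg, if_neg]
      · rintro rfl
        exact lt_irrefl _ (hrank.trans hjx)
      · rintro rfl
        exact lt_irrefl _ hjx
    · exact absurd (rankPBW_lt_of_row_lt h x (α (τ.symm i))) (not_lt.2 hjx.le)

theorem Dmin_eq_sum (α : Fin p → Fin n) :
    Dmin p n α = ∑ τ : Equiv.Perm (Fin p),
      monomial (permExp α τ) (((Equiv.Perm.sign τ : ℤ) : ℂ)) := by
  rw [Dmin, Matrix.det_apply']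
  refine Finset.sum_congr rfl fun τ _ => ?_
  have : (∏ i, (X (τ i, α i) : MvPolynomial (Fin p × Fin n) ℂ)) = monomial (permExp α τ) 1 := by
    rw [permExp, monomial_sum_one]
    rfl
  simp only [Matrix.of_apply]
  rw [this, ← mul_one (((Equiv.Perm.sign τ : ℤ) : ℂ)), ← C_mul_monomial]
  simp

theorem coeff_Dmin_of_isPBW {α : Fin p → Fin n} (hα : IsPBW p n α) :
    coeff (permExp α 1) (Dmin p n α) = 1 := by
  rw [Dmin_eq_sum, coeff_sum, Finset.sum_eq_single 1]
  · simp
  · intro τ _ hτ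
    rw [coeff_monomial, if_neg]
    intro h
    have := permExp_lt_of_isPBW hα hτ
    rw [h] at this
    exact degRevLex_irrefl _ this
  · simp

theorem isLead_Dmin_of_isPBW {α : Fin p → Fin n} (hα : IsPBW p n α) :
    IsLead (rankPBW p n) (Dmin p n α) (permExp α 1) := by
  refine ⟨?_, fun m hm hne => ?_⟩
  · rw [mem_support_iff, coeff_Dmin_of_isPBW hα]
    exact one_ne_zero
  · rw [mem_support_iff, Dmin_eq_sum, coeff_sum] at hm
    obtain ⟨τ, -, hτ⟩ := Finset.exists_ne_zero_of_sum_ne_zero hm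
    rw [coeff_monomial] at hτ
    have hmτ : permExp α τ = m := by
      by_contra h
      exact hτ (if_neg h)
    subst hmτ
    exact permExp_lt_of_isPBW hα fun h => hne (by rw [h])

theorem initTerm_Dmin_of_isPBW (hpn : p < n) {α : Fin p → Fin n} (hα : IsPBW p n α) :
    initTerm (degRevLex (rankPBW p n)) (Dmin p n α) = monomial (permExp α 1) 1 := by
  rw [(isLead_Dmin_of_isPBW hα).initTerm_eq (rankPBW_injective hpn),
    coeff_Dmin_of_isPBW hα]

end LeadingTerm

section Straightening

variable {p n : ℕ}

/-- The sum of the entries of a tuple. -/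
def tupleSum (I : Fin p → Fin n) : ℕ := ∑ i, (I i : ℕ)

theorem Dmin_perm (I : Fin p → Fin n) (σ : Equiv.Perm (Fin p)) :
    Dmin p n (I ∘ σ) = (Equiv.Perm.sign σ : ℤ) • Dmin p n I := by
  rw [Dmin, Dmin, zsmul_eq_mul, ← Matrix.det_permute']
  rfl

theorem Dmin_eq_zero_of_not_injective {I : Fin p → Fin n} (h : ¬ Function.Injective I) :
    Dmin p n I = 0 := by
  simp only [Function.Injective, not_forall] at h
  obtain ⟨i, j, hij, hne⟩ := h
  exact Matrix.det_zero_of_column_eq hne fun k => by simp [hij]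

theorem Dmin_eq_zero_or_sorted (I : Fin p → Fin n) :
    Dmin p n I = 0 ∨ ∃ I' : Fin p → Fin n, StrictMono I' ∧ tupleSum I' = tupleSum I ∧
      ∃ z : ℤ, Dmin p n I = z • Dmin p n I' := by
  by_cases h : Function.Injective I
  · refine Or.inr ⟨I ∘ Tuple.sort I, (Tuple.monotone_sort I).strictMono_of_injective
      (h.comp (Tuple.sort I).injective), ?_, (Equiv.Perm.sign (Tuple.sort I) : ℤ), ?_⟩
    · exact Equiv.sum_comp (Tuple.sort I) fun i => (I i : ℕ)
    · rw [Dmin_perm, smul_smul, ← Units.val_mul, Int.units_mul_self]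
      simp
  · exact Or.inl (Dmin_eq_zero_of_not_injective h)

/-- The positions whose entries are shuffled when straightening at position `k`: those of the
first tuple from `k` on (right) and those of the second one up to `k` (left). -/
abbrev Shuf (k : Fin p) := {i : Fin p // i ≤ k} ⊕ {i : Fin p // k ≤ i}

theorem card_shuf (k : Fin p) : Fintype.card (Shuf k) = p + 1 := by
  rw [Fintype.card_sum, Fintype.card_subtype, Fintype.card_subtype]
  have h1 : (Finset.univ.filter fun i : Fin p => i ≤ k) = Finset.Iic k := by ext; simp
  have h2 : (Finset.univ.filter fun i : Fin p => k ≤ i) = Finset.Ici k := by ext; simp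
  rw [h1, h2, Fin.card_Iic, Fin.card_Ici]
  omega

section Fill

variable {A : Type*}

/-- Replace the entries of `I` from `k` on by the right half of `w`. -/
def upperFill (I : Fin p → A) (k : Fin p) (w : Shuf k → A) (i : Fin p) : A :=
  if h : k ≤ i then w (Sum.inr ⟨i, h⟩) else I i

/-- Replace the entries of `J` up to `k` by the left half of `w`. -/
def lowerFill (J : Fin p → A) (k : Fin p) (w : Shuf k → A) (i : Fin p) : A :=
  if h : i ≤ k then w (Sum.inl ⟨i, h⟩) else J i

theorem upperFill_update_inr {k : Fin p} [DecidableEq (Shuf k)] (I : Fin p → A) (w : Shuf k → A)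
    (i : {i : Fin p // k ≤ i}) (x : A) :
    upperFill I k (Function.update w (Sum.inr i) x) =
      Function.update (upperFill I k w) i x := by
  funext j
  by_cases hj : j = i
  · subst hj
    simp [upperFill, i.2]
  · have : ∀ h : k ≤ j, (⟨j, h⟩ : {i : Fin p // k ≤ i}) ≠ i := fun h h' => hj (h' ▸ rfl)
    by_cases h : k ≤ j <;> simp [upperFill, h, hj, this]

theorem upperFill_update_inl {k : Fin p} [DecidableEq (Shuf k)] (I : Fin p → A) (w : Shuf k → A)
    (i : {i : Fin p // i ≤ k}) (x : A) :
    upperFill I k (Function.update w (Sum.inl i) x) = upperFill I k w := by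
  funext j
  simp [upperFill]

theorem lowerFill_update_inl {k : Fin p} [DecidableEq (Shuf k)] (J : Fin p → A) (w : Shuf k → A)
    (i : {i : Fin p // i ≤ k}) (x : A) :
    lowerFill J k (Function.update w (Sum.inl i) x) =
      Function.update (lowerFill J k w) i x := by
  funext j
  by_cases hj : j = i
  · subst hj
    simp [lowerFill, i.2]
  · have : ∀ h : j ≤ k, (⟨j, h⟩ : {i : Fin p // i ≤ k}) ≠ i := fun h h' => hj (h' ▸ rfl)
    by_cases h : j ≤ k <;> simp [lowerFill, h, hj, this]

theorem lowerFill_update_inr {k : Fin p} [DecidableEq (Shuf k)] (J : Fin p → A) (w : Shuf k → A)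
    (i : {i : Fin p // k ≤ i}) (x : A) :
    lowerFill J k (Function.update w (Sum.inr i) x) = lowerFill J k w := by
  funext j
  simp [lowerFill]

end Fill

/-- The product of two determinants as a multilinear function of the shuffled rows. -/
def shufMultilinear {R : Type*} [CommRing R] (V W : Fin p → Fin p → R) (k : Fin p) :
    MultilinearMap R (fun _ : Shuf k => Fin p → R) R where
  toFun w := Matrix.detRowAlternating (upperFill V k w) *
    Matrix.detRowAlternating (lowerFill W k w)
  map_update_add' w i x y := by
    rcases i with i | i
    · simp only [upperFill_update_inl, lowerFill_update_inl, AlternatingMap.map_update_add]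
      ring
    · simp only [upperFill_update_inr, lowerFill_update_inr, AlternatingMap.map_update_add]
      ring
  map_update_smul' w i c x := by
    rcases i with i | i
    · simp only [upperFill_update_inl, lowerFill_update_inl, AlternatingMap.map_update_smul,
        smul_eq_mul]
      ring
    · simp only [upperFill_update_inr, lowerFill_update_inr, AlternatingMap.map_update_smul,
        smul_eq_mul]
      ring

theorem sum_shuf_eq_zero {R : Type*} [CommRing R] [IsDomain R] (V W : Fin p → Fin p → R)
    (k : Fin p) (w : Shuf k → Fin p → R) :
    ∑ σ : Equiv.Perm (Shuf k), (Equiv.Perm.sign σ : ℤ) •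
      (Matrix.det (Matrix.of (upperFill V k (w ∘ σ))) *
        Matrix.det (Matrix.of (lowerFill W k (w ∘ σ)))) = 0 := by
  have hdep : ¬ LinearIndependent R w := by
    intro h
    have := h.fintype_card_le_finrank
    rw [card_shuf, Module.finrank_fin_fun] at this
    omega
  have h0 := AlternatingMap.map_linearDependent
    (MultilinearMap.alternatization (shufMultilinear V W k)) w hdep
  rw [MultilinearMap.alternatization_apply] at h0
  exact h0

/-- The tuple `J` up to `k` followed by the tuple `I` from `k` on. -/
def shufEntry (I J : Fin p → Fin n) (k : Fin p) : Shuf k → Fin n :=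
  Sum.elim (fun i => J i) (fun i => I i)

theorem sum_shuf_Dmin (I J : Fin p → Fin n) (k : Fin p) :
    ∑ σ : Equiv.Perm (Shuf k), (Equiv.Perm.sign σ : ℤ) •
      (Dmin p n (upperFill I k (shufEntry I J k ∘ σ)) *
        Dmin p n (lowerFill J k (shufEntry I J k ∘ σ))) = 0 := by
  let col : Fin n → Fin p → MvPolynomial (Fin p × Fin n) ℂ := fun x i => X (i, x)
  have hD : ∀ I : Fin p → Fin n, Dmin p n I = Matrix.det (Matrix.of (col ∘ I)) := by
    intro I
    rw [Dmin, ← Matrix.det_transpose]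
    rfl
  rw [← sum_shuf_eq_zero (col ∘ I) (col ∘ J) k (col ∘ shufEntry I J k)]
  refine Finset.sum_congr rfl fun σ _ => ?_
  rw [hD, hD]
  congr 5
  · funext i
    by_cases h : k ≤ i <;> simp [upperFill, h]
  · funext i
    by_cases h : i ≤ k <;> simp [lowerFill, h]

theorem shuf_term_of_block (I J : Fin p → Fin n) (k : Fin p) {σ : Equiv.Perm (Shuf k)}
    (hσ : σ ∈ (Equiv.Perm.sumCongrHom {i : Fin p // i ≤ k} {i : Fin p // k ≤ i}).range) :
    (Equiv.Perm.sign σ : ℤ) •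
      (Dmin p n (upperFill I k (shufEntry I J k ∘ σ)) *
        Dmin p n (lowerFill J k (shufEntry I J k ∘ σ))) = Dmin p n I * Dmin p n J := by
  obtain ⟨⟨a, b⟩, rfl⟩ := hσ
  have hI : upperFill I k (shufEntry I J k ∘ Equiv.Perm.sumCongrHom _ _ (a, b)) =
      I ∘ Equiv.Perm.ofSubtype b := by
    funext i
    by_cases h : k ≤ i
    · simp [upperFill, shufEntry, h, Equiv.Perm.ofSubtype_apply_of_mem b h]
    · simp [upperFill, h, Equiv.Perm.ofSubtype_apply_of_not_mem b h]
  have hJ : lowerFill J k (shufEntry I J k ∘ Equiv.Perm.sumCongrHom _ _ (a, b)) =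
      J ∘ Equiv.Perm.ofSubtype a := by
    funext i
    by_cases h : i ≤ k
    · simp [lowerFill, shufEntry, h, Equiv.Perm.ofSubtype_apply_of_mem a h]
    · simp [lowerFill, h, Equiv.Perm.ofSubtype_apply_of_not_mem a h]
  rw [hI, hJ, Dmin_perm, Dmin_perm, Equiv.Perm.sign_ofSubtype, Equiv.Perm.sign_ofSubtype]
  have hs : Equiv.Perm.sign (Equiv.Perm.sumCongrHom _ _ (a, b)) =
      Equiv.Perm.sign a * Equiv.Perm.sign b := Equiv.Perm.sign_sumCongr a b
  rw [hs, smul_mul_smul_comm, smul_smul]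
  have : ((Equiv.Perm.sign a * Equiv.Perm.sign b : ℤˣ) : ℤ) *
      ((Equiv.Perm.sign b : ℤ) * (Equiv.Perm.sign a : ℤ)) = 1 := by
    rw [← Units.val_mul, ← Units.val_mul, mul_comm (Equiv.Perm.sign b), Int.units_mul_self]
    rfl
  rw [this, one_smul]

theorem tupleSum_upperFill (I : Fin p → Fin n) (k : Fin p) (w : Shuf k → Fin n) :
    tupleSum (upperFill I k w) =
      ∑ i : {i : Fin p // k ≤ i}, (w (Sum.inr i) : ℕ) + ∑ i : {i : Fin p // ¬ k ≤ i}, (I i : ℕ) := by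
  rw [tupleSum, ← Fintype.sum_subtype_add_sum_subtype (fun i => k ≤ i)]
  congr 1 <;> refine Finset.sum_congr rfl fun i _ => ?_ <;> simp [upperFill, i.2]

theorem tupleSum_lowerFill (J : Fin p → Fin n) (k : Fin p) (w : Shuf k → Fin n) :
    tupleSum (lowerFill J k w) =
      ∑ i : {i : Fin p // i ≤ k}, (w (Sum.inl i) : ℕ) + ∑ i : {i : Fin p // ¬ i ≤ k}, (J i : ℕ) := by
  rw [tupleSum, ← Fintype.sum_subtype_add_sum_subtype (fun i => i ≤ k)]
  congr 1 <;> refine Finset.sum_congr rfl fun i _ => ?_ <;> simp [lowerFill, i.2]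

theorem tupleSum_shuf_add (I J : Fin p → Fin n) (k : Fin p) (σ : Equiv.Perm (Shuf k)) :
    tupleSum (upperFill I k (shufEntry I J k ∘ σ)) +
      tupleSum (lowerFill J k (shufEntry I J k ∘ σ)) = tupleSum I + tupleSum J := by
  have h := Equiv.sum_comp σ fun x => (shufEntry I J k x : ℕ)
  rw [Fintype.sum_sum_type, Fintype.sum_sum_type] at h
  have hI := Fintype.sum_subtype_add_sum_subtype (fun i => k ≤ i) fun i => (I i : ℕ)
  have hJ := Fintype.sum_subtype_add_sum_subtype (fun i => i ≤ k) fun i => (J i : ℕ)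
  rw [tupleSum_upperFill, tupleSum_lowerFill]
  simp only [shufEntry, Sum.elim_inl, Sum.elim_inr, Function.comp_apply, tupleSum] at *
  omega

theorem tupleSum_lt_shuf {I J : Fin p → Fin n} (hI : StrictMono I) (hJ : StrictMono J) {k : Fin p}
    (hk : J k < I k) {σ : Equiv.Perm (Shuf k)}
    (hσ : σ ∉ (Equiv.Perm.sumCongrHom {i : Fin p // i ≤ k} {i : Fin p // k ≤ i}).range) :
    tupleSum J < tupleSum (lowerFill J k (shufEntry I J k ∘ σ)) := by
  have hJs := Fintype.sum_subtype_add_sum_subtype (fun i => i ≤ k) fun i => (J i : ℕ)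
  rw [tupleSum_lowerFill, tupleSum, ← hJs, add_lt_add_iff_right]
  let u : Shuf k → ℤ := fun x => (shufEntry I J k x : ℤ) - J k
  have hul : ∀ i, u (Sum.inl i) ≤ 0 := by
    intro i
    have : J i ≤ J k := hJ.monotone i.2
    simp only [u, shufEntry, Sum.elim_inl]
    omega
  have hur : ∀ i, 0 < u (Sum.inr i) := by
    intro i
    have : I k ≤ I i := hI.monotone i.2
    simp only [u, shufEntry, Sum.elim_inr]
    omega
  have hex : ∃ i j, σ (Sum.inl i) = Sum.inr j := by
    by_contra! h
    refine hσ (Equiv.Perm.mem_sumCongrHom_range_of_perm_mapsTo_inl ?_)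
    rintro _ ⟨i, rfl⟩
    rcases hx : σ (Sum.inl i) with j | j
    · exact ⟨j, rfl⟩
    · exact absurd hx (h i j)
  obtain ⟨i, j, hij⟩ := hex
  have h1 : ∑ i, min (u (σ (Sum.inl i))) 0 < ∑ i, u (σ (Sum.inl i)) := by
    refine Finset.sum_lt_sum (fun _ _ => min_le_left _ _) ⟨i, Finset.mem_univ i, ?_⟩
    rw [hij, min_eq_right (hur j).le]
    exact hur j
  have h2 : ∑ i, u (Sum.inl i) ≤ ∑ i, min (u (σ (Sum.inl i))) 0 := by
    have h := Equiv.sum_comp σ fun x => min (u x) 0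
    rw [Fintype.sum_sum_type, Fintype.sum_sum_type] at h
    have h3 : ∑ i, min (u (Sum.inr i)) 0 = 0 :=
      Finset.sum_eq_zero fun i _ => min_eq_right (hur i).le
    have h4 : ∑ i, min (u (Sum.inl i)) 0 = ∑ i, u (Sum.inl i) :=
      Finset.sum_congr rfl fun i _ => min_eq_left (hul i)
    have h5 : ∑ i, min (u (σ (Sum.inr i))) 0 ≤ 0 :=
      Finset.sum_nonpos fun i _ => min_le_right _ _
    linarith
  have h6 := h2.trans_lt h1
  simp only [u, Finset.sum_sub_distrib, shufEntry, Sum.elim_inl] at h6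
  have h7 := (sub_lt_sub_iff_right _).1 h6
  simp only [Function.comp_apply, shufEntry]
  exact_mod_cast h7

/-- Exchange relation: a product of two minors violating the semistandardness condition is a
combination of products in which entries have moved towards the second factor. -/
theorem Dmin_mul_mem_span {I J : Fin p → Fin n} (hI : StrictMono I) (hJ : StrictMono J)
    {k : Fin p} (hk : J k < I k) :
    Dmin p n I * Dmin p n J ∈ Submodule.span ℂ {f | ∃ I' J' : Fin p → Fin n,
      f = Dmin p n I' * Dmin p n J' ∧ tupleSum I' < tupleSum I ∧
        tupleSum I' + tupleSum J' = tupleSum I + tupleSum J} := by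
  set S := Submodule.span ℂ {f | ∃ I' J' : Fin p → Fin n,
      f = Dmin p n I' * Dmin p n J' ∧ tupleSum I' < tupleSum I ∧
        tupleSum I' + tupleSum J' = tupleSum I + tupleSum J}
  let B := (Equiv.Perm.sumCongrHom {i : Fin p // i ≤ k} {i : Fin p // k ≤ i}).range
  have h0 := sum_shuf_Dmin I J k
  rw [← Finset.sum_filter_add_sum_filter_not Finset.univ (fun σ => σ ∈ B)] at h0
  rw [Finset.sum_congr rfl fun σ hσ => shuf_term_of_block I J k (Finset.mem_filter.1 hσ).2,
    Finset.sum_const] at h0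
  have hcard : (Finset.univ.filter fun σ => σ ∈ B).card ≠ 0 :=
    Finset.card_ne_zero_of_mem (Finset.mem_filter.2 ⟨Finset.mem_univ 1, one_mem B⟩)
  have hrest : (Finset.univ.filter fun σ => σ ∈ B).card • (Dmin p n I * Dmin p n J) ∈ S := by
    rw [eq_neg_of_add_eq_zero_left h0]
    refine S.neg_mem (S.sum_mem fun σ hσ => ?_)
    have hlt := tupleSum_lt_shuf hI hJ hk (Finset.mem_filter.1 hσ).2
    have hadd := tupleSum_shuf_add I J k σ
    exact S.toAddSubgroup.zsmul_mem (Submodule.subset_span ⟨_, _, rfl, by omega, hadd⟩) _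
  rw [← Nat.cast_smul_eq_nsmul ℂ] at hrest
  exact (S.smul_mem_iff (Nat.cast_ne_zero.2 hcard)).1 hrest

/-- The product of the minors of a sequence of tuples. -/
def Dprod {d : ℕ} (T : Fin d → Fin p → Fin n) : MvPolynomial (Fin p × Fin n) ℂ :=
  ∏ c, Dmin p n (T c)

/-- Semistandard tableaux with `d` columns: chains of strictly increasing tuples. -/
abbrev Tableau (p n d : ℕ) :=
  {T : Fin d → Fin p → Fin n // (∀ c, StrictMono (T c)) ∧ Monotone T}

/-- The standard products span all products of minors. -/
theorem Dprod_mem_span {d : ℕ} (T : Fin d → Fin p → Fin n) :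
    Dprod T ∈ Submodule.span ℂ (Set.range fun T : Tableau p n d => Dprod T.1) := by
  set S := Submodule.span ℂ (Set.range fun T : Tableau p n d => Dprod T.1)
  induction hμ : ∑ c : Fin d, (d - (c : ℕ)) * tupleSum (T c) using Nat.strong_induction_on
    generalizing T with
  | _ μ ih =>
  subst hμ
  by_cases hzero : ∃ c, Dmin p n (T c) = 0
  · obtain ⟨c, hc⟩ := hzero
    rw [Dprod, Finset.prod_eq_zero (Finset.mem_univ c) hc]
    exact S.zero_mem
  push Not at hzero
  choose T' hmono hsum z hz using fun c => (Dmin_eq_zero_or_sorted (T c)).resolve_left (hzero c)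
  have hT : Dprod T = (∏ c, z c) • Dprod T' := by
    rw [Dprod, Dprod, Finset.prod_congr rfl fun c _ => hz c]
    simp only [zsmul_eq_mul, Finset.prod_mul_distrib, Int.cast_prod]
  rw [hT]
  refine S.toAddSubgroup.zsmul_mem ?_ _
  change Dprod T' ∈ S
  by_cases hm : Monotone T'
  · exact Submodule.subset_span ⟨⟨T', hmono, hm⟩, rfl⟩
  simp only [Monotone, not_forall] at hm
  obtain ⟨c, c', hcc, hle⟩ := hm
  simp only [Pi.le_def, not_forall, not_le] at hle
  obtain ⟨k, hk⟩ := hle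
  have hne : c ≠ c' := by
    rintro rfl
    exact lt_irrefl _ hk
  have hlt : (c : ℕ) < c' := lt_of_le_of_ne hcc (Fin.val_ne_of_ne hne)
  have hc'mem : c' ∈ Finset.univ.erase c := Finset.mem_erase.2 ⟨hne.symm, Finset.mem_univ _⟩
  have hsplit : ∀ U : Fin d → Fin p → Fin n, Dprod U =
      Dmin p n (U c) * Dmin p n (U c') *
        ∏ b ∈ (Finset.univ.erase c).erase c', Dmin p n (U b) := by
    intro U
    rw [Dprod, ← Finset.mul_prod_erase _ _ (Finset.mem_univ c),
      ← Finset.mul_prod_erase _ _ hc'mem, mul_assoc]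
  have hsplit' : ∀ U : Fin d → Fin p → Fin n, ∑ c : Fin d, (d - (c : ℕ)) * tupleSum (U c) =
      (d - (c : ℕ)) * tupleSum (U c) + ((d - (c' : ℕ)) * tupleSum (U c') +
        ∑ b ∈ (Finset.univ.erase c).erase c', (d - (b : ℕ)) * tupleSum (U b)) := by
    intro U
    rw [← Finset.add_sum_erase _ _ (Finset.mem_univ c), ← Finset.add_sum_erase _ _ hc'mem]
  rw [hsplit T']
  set Q := ∏ b ∈ (Finset.univ.erase c).erase c', Dmin p n (T' b)
  have hmem := Dmin_mul_mem_span (hmono c) (hmono c') hk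
  have hmap := Submodule.mem_map_of_mem (f := LinearMap.mulRight ℂ Q) hmem
  rw [LinearMap.mulRight_apply] at hmap
  refine Submodule.map_span_le _ _ S |>.2 ?_ hmap
  rintro _ ⟨I', J', rfl, hI', hadd⟩
  rw [LinearMap.mulRight_apply]
  let U := Function.update (Function.update T' c I') c' J'
  have hUc : U c = I' := by simp [U, hne]
  have hUc' : U c' = J' := by simp [U]
  have hUb : ∀ b ∈ (Finset.univ.erase c).erase c', U b = T' b := by
    intro b hb
    simp only [Finset.mem_erase] at hb
    simp [U, hb.1, hb.2.1]
  have hUprod : Dmin p n I' * Dmin p n J' * Q = Dprod U := by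
    rw [hsplit U, hUc, hUc', Finset.prod_congr rfl fun b hb => by rw [hUb b hb]]
  rw [hUprod]
  refine ih _ ?_ U rfl
  have hTT' : ∑ c : Fin d, (d - (c : ℕ)) * tupleSum (T c) =
      ∑ c : Fin d, (d - (c : ℕ)) * tupleSum (T' c) :=
    Finset.sum_congr rfl fun c _ => by rw [hsum c]
  rw [hTT', hsplit' U, hsplit' T', hUc, hUc',
    Finset.sum_congr rfl fun b hb => by rw [hUb b hb]]
  obtain ⟨r, hr⟩ : ∃ r, d - (c : ℕ) = (d - (c' : ℕ)) + (r + 1) :=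
    ⟨(c' : ℕ) - c - 1, by have := c'.2; omega⟩
  rw [hr]
  nlinarith

end Straightening

section Transfer

variable {p n : ℕ}

/-- The partition attached to a strictly increasing tuple, with a leading zero. -/
def shape (I : Fin p → Fin n) : ℕ → ℕ
  | 0 => 0
  | k + 1 => if h : k < p then (I ⟨k, h⟩ : ℕ) - k else 0

theorem shape_succ (I : Fin p → Fin n) (k : Fin p) : shape I (k + 1) = (I k : ℕ) - k := by
  simp [shape]

theorem StrictMono.add_sub_le {I : Fin p → Fin n} (hI : StrictMono I) {i j : Fin p}
    (h : i ≤ j) : (I i : ℕ) + (j - i) ≤ I j := by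
  obtain ⟨j, hj⟩ := j
  induction j with
  | zero =>
    have : i = ⟨0, hj⟩ := le_antisymm h (Nat.zero_le _)
    subst this
    simp
  | succ j ih =>
    rcases h.eq_or_lt with rfl | hlt
    · simp
    · have hij : (i : ℕ) ≤ j := Nat.lt_succ_iff.1 hlt
      have h1 := ih (by omega) hij
      have h2 : I ⟨j, by omega⟩ < I ⟨j + 1, hj⟩ := hI (by simp)
      have h3 : (I ⟨j, by omega⟩ : ℕ) < I ⟨j + 1, hj⟩ := h2
      simp only at h1 ⊢
      omega

theorem StrictMono.le_apply_fin {I : Fin p → Fin n} (hI : StrictMono I) (i : Fin p) :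
    (i : ℕ) ≤ I i := by
  have := hI.add_sub_le (i := ⟨0, i.pos⟩) (j := i) (Nat.zero_le _)
  simp only at this
  omega

theorem StrictMono.apply_fin_add_le {I : Fin p → Fin n} (hI : StrictMono I) (i : Fin p) :
    (I i : ℕ) + p ≤ n + i := by
  have h1 := hI.add_sub_le (i := i) (j := ⟨p - 1, by have := i.2; omega⟩)
    (Fin.le_def.2 (by have := i.2; simp only; omega))
  have h2 := (I ⟨p - 1, by have := i.2; omega⟩).2
  have := i.2
  simp only at h1
  omega

theorem shape_mono {I : Fin p → Fin n} (hI : StrictMono I) {j k : ℕ} (hjk : j ≤ k) (hk : k ≤ p) :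
    shape I j ≤ shape I k := by
  rcases j with _ | j
  · simp [shape]
  rcases k with _ | k
  · omega
  have h1 := shape_succ I ⟨j, by omega⟩
  have h2 := shape_succ I ⟨k, by omega⟩
  have h3 := hI.add_sub_le (i := ⟨j, by omega⟩) (j := ⟨k, by omega⟩) (Nat.le_of_succ_le_succ hjk)
  simp only at h1 h2 h3
  omega

theorem shape_add_le {I : Fin p → Fin n} (hI : StrictMono I) (k : Fin p) :
    shape I (k + 1) + p ≤ n := by
  have := hI.apply_fin_add_le k
  have := hI.le_apply_fin k
  have := shape_succ I k
  omega

/-- The PBW tuple recording the corners of the partition attached to `I`. -/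
def cornerTuple (I : Fin p → Fin n) (k : Fin p) : Fin n :=
  if h : shape I k < shape I (k + 1) then ⟨n - shape I (k + 1), by have := (I k).pos; omega⟩
  else ⟨min k (I k), lt_of_le_of_lt (min_le_right _ _) (I k).2⟩

theorem cornerTuple_val {I : Fin p → Fin n} (hI : StrictMono I) (k : Fin p) :
    (cornerTuple I k : ℕ) =
      if shape I k < shape I (k + 1) then n - shape I (k + 1) else (k : ℕ) := by
  have := hI.le_apply_fin k
  unfold cornerTuple
  split_ifs with h
  · rfl
  · exact min_eq_left this

theorem cornerTuple_isPBW {I : Fin p → Fin n} (hI : StrictMono I) : IsPBW p n (cornerTuple I) := by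
  have key : ∀ j k : Fin p, j < k → shape I k < shape I (k + 1) →
      shape I (j + 1) < shape I (k + 1) := fun j k hjk h =>
    (shape_mono hI (Nat.succ_le_of_lt hjk) k.2.le).trans_lt h
  refine ⟨?_, ?_, ?_⟩
  · refine Function.Injective.of_lt_imp_ne fun j k hjk heq => ?_
    have heq := congrArg Fin.val heq
    rw [cornerTuple_val hI, cornerTuple_val hI] at heq
    have hj := shape_add_le hI j
    have hk := shape_add_le hI k
    have := key j k hjk
    have := j.2
    have := k.2
    have : (j : ℕ) < k := hjk
    split_ifs at heq <;> omega
  · intro j hj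
    rw [cornerTuple_val hI] at hj ⊢
    have := shape_add_le hI j
    split_ifs at hj ⊢ <;> omega
  · intro j k hk hkj
    rw [cornerTuple_val hI] at hk hkj
    rw [cornerTuple_val hI] at hkj
    have hj := shape_add_le hI j
    have hk' := shape_add_le hI k
    have hp := k.2
    have hjp := j.2
    by_contra hle
    rcases (not_lt.1 hle).eq_or_lt with rfl | hlt
    · exact lt_irrefl _ hkj
    · have := key k j hlt
      split_ifs at hk hkj <;> omega

theorem cornerTuple_eq_iff {I : Fin p → Fin n} (hI : StrictMono I) (k : Fin p) {x : Fin n}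
    (hx : p ≤ (x : ℕ)) : cornerTuple I k = x ↔
      shape I k < shape I (k + 1) ∧ shape I (k + 1) = n - x := by
  rw [Fin.ext_iff, cornerTuple_val hI]
  have := shape_add_le hI k
  have := k.2
  have := x.2
  split_ifs <;> omega

theorem shape_mono_tuple {I J : Fin p → Fin n} (h : I ≤ J) (k : ℕ) : shape I k ≤ shape J k := by
  rcases k with _ | k
  · rfl
  · simp only [shape]
    split_ifs with hk
    · exact Nat.sub_le_sub_right (h ⟨k, hk⟩) k
    · rfl

theorem eq_of_shape_eq {I J : Fin p → Fin n} (hI : StrictMono I) (hJ : StrictMono J)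
    (h : ∀ k ≤ p, shape I k = shape J k) : I = J := by
  funext k
  have h1 := h (k + 1) k.2
  rw [shape_succ, shape_succ] at h1
  have := hI.le_apply_fin k
  have := hJ.le_apply_fin k
  exact Fin.ext (by omega)

theorem IsUpperSet.eq_of_card_eq {α : Type*} [LinearOrder α] {s t : Finset α}
    (hs : IsUpperSet (s : Set α)) (ht : IsUpperSet (t : Set α)) (h : s.card = t.card) : s = t := by
  rcases hs.total ht with hst | hts
  · exact Finset.eq_of_subset_of_card_le (Finset.coe_subset.1 hst) h.ge
  · exact (Finset.eq_of_subset_of_card_le (Finset.coe_subset.1 hts) h.le).symm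

/-- The leading monomial of the product of PBW minors attached to a tableau. -/
def tableauExp {d : ℕ} (T : Tableau p n d) : Fin p × Fin n →₀ ℕ :=
  ∑ c, permExp (cornerTuple (T.1 c)) 1

theorem tableauExp_apply {d : ℕ} (T : Tableau p n d) (k : Fin p) {x : Fin n} (hx : p ≤ (x : ℕ)) :
    tableauExp T (k, x) = (Finset.univ.filter fun c => shape (T.1 c) k < shape (T.1 c) (k + 1) ∧
      shape (T.1 c) (k + 1) = n - x).card := by
  rw [tableauExp, Finsupp.finsetSum_apply, Finset.card_filter]
  refine Finset.sum_congr rfl fun c _ => ?_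
  rw [permExp_apply]
  exact if_congr (cornerTuple_eq_iff (T.2.1 c) k hx) rfl rfl

theorem shape_eq_of_tableauExp_eq {d : ℕ} {T U : Tableau p n d}
    (h : tableauExp T = tableauExp U) :
    ∀ k ≤ p, ∀ c, shape (T.1 c) k = shape (U.1 c) k := by
  intro k
  induction k with
  | zero => simp [shape]
  | succ k ih =>
    intro hk
    have ih := ih (by omega)
    have hcorner : ∀ l, (Finset.univ.filter fun c => shape (T.1 c) k < shape (T.1 c) (k + 1) ∧
        shape (T.1 c) (k + 1) = l + 1).card =
        (Finset.univ.filter fun c => shape (U.1 c) k < shape (U.1 c) (k + 1) ∧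
          shape (U.1 c) (k + 1) = l + 1).card := by
      intro l
      by_cases hl : l + 1 + p ≤ n
      · have h1 := tableauExp_apply T ⟨k, hk⟩ (x := ⟨n - (l + 1), by omega⟩) (by simp only; omega)
        have h2 := tableauExp_apply U ⟨k, hk⟩ (x := ⟨n - (l + 1), by omega⟩) (by simp only; omega)
        have h3 : n - (n - (l + 1)) = l + 1 := by omega
        simp only [h3] at h1 h2
        rw [← h1, ← h2, h]
      · have hempty : ∀ V : Tableau p n d, (Finset.univ.filter fun c =>
            shape (V.1 c) k < shape (V.1 c) (k + 1) ∧ shape (V.1 c) (k + 1) = l + 1) = ∅ := by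
          intro V
          refine Finset.filter_eq_empty_iff.2 fun c _ hc => ?_
          have := shape_add_le (V.2.1 c) ⟨k, hk⟩
          simp only at this
          omega
        rw [hempty, hempty]
    have hup : ∀ (V : Tableau p n d) (l : ℕ),
        IsUpperSet ((Finset.univ.filter fun c => l < shape (V.1 c) (k + 1) : Finset (Fin d)) :
          Set (Fin d)) := by
      intro V l a b hab ha
      simp only [Finset.coe_filter, Finset.mem_univ, true_and, Set.mem_ofPred_eq] at ha ⊢
      exact ha.trans_le (shape_mono_tuple (V.2.2 hab) _)
    have hdecomp : ∀ (V : Tableau p n d) (l : ℕ),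
        (Finset.univ.filter fun c => l < shape (V.1 c) (k + 1)).card =
        (Finset.univ.filter fun c => l + 1 < shape (V.1 c) (k + 1) ∨ l < shape (V.1 c) k).card +
        (Finset.univ.filter fun c => shape (V.1 c) k < shape (V.1 c) (k + 1) ∧
          shape (V.1 c) (k + 1) = l + 1).card := by
      intro V l
      rw [← Finset.card_union_of_disjoint]
      · congr 1
        ext c
        have := shape_mono (V.2.1 c) (show k ≤ k + 1 by omega) hk
        simp only [Finset.mem_filter, Finset.mem_univ, true_and, Finset.mem_union]
        omega
      · refine Finset.disjoint_filter.2 fun c _ h1 h2 => ?_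
        omega
    have hlevel : ∀ m l, n ≤ l + m → ∀ c,
        l < shape (T.1 c) (k + 1) ↔ l < shape (U.1 c) (k + 1) := by
      intro m
      induction m with
      | zero =>
        intro l hl c
        have := shape_add_le (T.2.1 c) ⟨k, hk⟩
        have := shape_add_le (U.2.1 c) ⟨k, hk⟩
        simp only at *
        omega
      | succ m ihm =>
        intro l hl
        have hnext := ihm (l + 1) (by omega)
        have hcard : (Finset.univ.filter fun c => l < shape (T.1 c) (k + 1)).card =
            (Finset.univ.filter fun c => l < shape (U.1 c) (k + 1)).card := by
          rw [hdecomp T, hdecomp U, hcorner]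
          simp only [hnext, ih]
        have heq := IsUpperSet.eq_of_card_eq (hup T l) (hup U l) hcard
        intro c
        simpa using Finset.ext_iff.1 heq c
    intro c
    have hall : ∀ l, l < shape (T.1 c) (k + 1) ↔ l < shape (U.1 c) (k + 1) := fun l =>
      hlevel n l (Nat.le_add_left _ _) c
    have h1 := hall (shape (T.1 c) (k + 1))
    have h2 := hall (shape (U.1 c) (k + 1))
    omega

theorem tableauExp_degree {d : ℕ} (T : Tableau p n d) : (tableauExp T).degree = d * p := by
  rw [tableauExp, map_sum]
  have : ∀ c, (permExp (cornerTuple (T.1 c)) 1).degree = p := fun c => permExp_degree _ _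
  simp [this]

theorem tableauExp_injective (hp : 1 ≤ p) :
    Function.Injective fun T : Σ d, Tableau p n d => tableauExp T.2 := by
  rintro ⟨d, T⟩ ⟨d', U⟩ h
  have hd : d = d' := by
    have h1 := congrArg Finsupp.degree h
    simp only [tableauExp_degree] at h1
    exact Nat.eq_of_mul_eq_mul_right hp h1
  subst hd
  have hTU : T = U := Subtype.ext <| funext fun c =>
    eq_of_shape_eq (T.2.1 c) (U.2.1 c) fun k hk => shape_eq_of_tableauExp_eq h k hk c
  rw [hTU]

end Transfer

section Sagbi

variable {p n : ℕ}

/-- The product of the PBW minors attached to a tableau. -/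
def pbwProd {d : ℕ} (T : Tableau p n d) : MvPolynomial (Fin p × Fin n) ℂ :=
  Dprod fun c => cornerTuple (T.1 c)

theorem isLead_pbwProd (hpn : p < n) {d : ℕ} (T : Tableau p n d) :
    IsLead (rankPBW p n) (pbwProd T) (tableauExp T) :=
  IsLead.prod (rankPBW_injective hpn) _ fun c _ =>
    isLead_Dmin_of_isPBW (cornerTuple_isPBW (T.2.1 c))

theorem span_pbwProd_eq (hp : 1 ≤ p) (hpn : p < n) (d : ℕ) :
    Submodule.span ℂ (Set.range fun T : Tableau p n d => pbwProd T) =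
      Submodule.span ℂ (Set.range fun T : Tableau p n d => Dprod T.1) := by
  have hinj : Function.Injective fun T : Tableau p n d => tableauExp T := fun T U h =>
    eq_of_heq (Sigma.mk.inj (tableauExp_injective hp (a₁ := ⟨d, T⟩) (a₂ := ⟨d, U⟩) h)).2
  have hind := linearIndependent_of_isLead (rankPBW_injective hpn)
    (fun T : Tableau p n d => isLead_pbwProd hpn T) hinj
  have : FiniteDimensional ℂ
      (Submodule.span ℂ (Set.range fun T : Tableau p n d => Dprod T.1)) :=
    FiniteDimensional.span_of_finite ℂ (Set.finite_range _)
  refine Submodule.eq_of_le_of_finrank_le ?_ ?_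
  · rw [Submodule.span_le]
    rintro _ ⟨T, rfl⟩
    exact Dprod_mem_span _
  · rw [finrank_span_eq_card hind]
    exact finrank_range_le_card _

theorem mem_span_Dprod_of_mem_Pluecker {f : MvPolynomial (Fin p × Fin n) ℂ}
    (hf : f ∈ Pluecker p n) :
    f ∈ Submodule.span ℂ (Set.range fun T : Σ d, Fin d → Fin p → Fin n => Dprod T.2) := by
  rw [Pluecker, ← Subalgebra.mem_toSubmodule, Algebra.adjoin_eq_span] at hf
  refine Submodule.span_mono ?_ hf
  intro g hg
  induction hg using Submonoid.closure_induction with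
  | mem g hg =>
    obtain ⟨I, rfl⟩ := hg
    exact ⟨⟨1, fun _ => I⟩, by simp [Dprod]⟩
  | one => exact ⟨⟨0, Fin.elim0⟩, by simp [Dprod]⟩
  | mul g h _ _ hg hh =>
    obtain ⟨⟨d, T⟩, rfl⟩ := hg
    obtain ⟨⟨e, U⟩, rfl⟩ := hh
    exact ⟨⟨d + e, Fin.append T U⟩, by simp [Dprod, Fin.prod_univ_add]⟩

theorem mem_span_pbwProd_of_mem_Pluecker (hp : 1 ≤ p) (hpn : p < n)
    {f : MvPolynomial (Fin p × Fin n) ℂ} (hf : f ∈ Pluecker p n) :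
    f ∈ Submodule.span ℂ (Set.range fun T : Σ d, Tableau p n d => pbwProd T.2) := by
  refine Submodule.span_le.2 ?_ (mem_span_Dprod_of_mem_Pluecker hf)
  rintro _ ⟨⟨d, T⟩, rfl⟩
  have h := Dprod_mem_span T
  rw [← span_pbwProd_eq hp hpn d] at h
  refine Submodule.span_mono ?_ h
  rintro _ ⟨U, rfl⟩
  exact ⟨⟨d, U⟩, rfl⟩

theorem adjoin_pbw_eq (hp : 1 ≤ p) (hpn : p < n) :
    Algebra.adjoin ℂ {f | ∃ α : Fin p → Fin n, IsPBW p n α ∧ f = Dmin p n α} = Pluecker p n := by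
  refine le_antisymm (Algebra.adjoin_mono ?_) fun f hf => ?_
  · rintro _ ⟨α, -, rfl⟩
    exact ⟨α, rfl⟩
  · rw [← Subalgebra.mem_toSubmodule]
    refine Submodule.span_le.2 ?_ (mem_span_pbwProd_of_mem_Pluecker hp hpn hf)
    rintro _ ⟨⟨d, T⟩, rfl⟩
    simp only [SetLike.mem_coe, Subalgebra.mem_toSubmodule, pbwProd, Dprod]
    refine prod_mem fun c _ => Algebra.subset_adjoin ?_
    exact ⟨_, cornerTuple_isPBW (T.2.1 c), rfl⟩

theorem initTerm_mem_adjoin (hp : 1 ≤ p) (hpn : p < n) {f : MvPolynomial (Fin p × Fin n) ℂ}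
    (hf : f ∈ Pluecker p n) :
    initTerm (degRevLex (rankPBW p n)) f ∈
      Algebra.adjoin ℂ {f | ∃ α : Fin p → Fin n, IsPBW p n α ∧
        f = initTerm (degRevLex (rankPBW p n)) (Dmin p n α)} := by
  have hr := rankPBW_injective hpn
  obtain ⟨c, rfl⟩ := (Finsupp.mem_span_range_iff_exists_finsupp).1
    (mem_span_pbwProd_of_mem_Pluecker hp hpn hf)
  by_cases hc : c = 0
  · rw [hc, Finsupp.sum_zero_index, initTerm_zero]
    exact zero_mem _
  obtain ⟨⟨d, T⟩, hT⟩ := IsLead.linearCombination hr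
    (fun T : Σ d, Tableau p n d => isLead_pbwProd hpn T.2) (tableauExp_injective hp) hc
  rw [Finsupp.linearCombination_apply] at hT
  rw [hT.initTerm_eq hr]
  have hmon : ∀ a : ℂ, monomial (tableauExp T) a =
      a • ∏ c, initTerm (degRevLex (rankPBW p n)) (Dmin p n (cornerTuple (T.1 c))) := by
    intro a
    rw [Finset.prod_congr rfl fun c _ => initTerm_Dmin_of_isPBW hpn (cornerTuple_isPBW (T.2.1 c)),
      ← monomial_sum_one, smul_monomial, smul_eq_mul, mul_one]
    rfl
  rw [hmon]
  refine Subalgebra.smul_mem _ (Subalgebra.prod_mem _ fun c _ => Algebra.subset_adjoin ?_) _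
  exact ⟨_, cornerTuple_isPBW (T.2.1 c), rfl⟩

theorem adjoin_initTerm_eq (hp : 1 ≤ p) (hpn : p < n) :
    Subalgebra.toSubmodule (Algebra.adjoin ℂ
        {f | ∃ α : Fin p → Fin n, IsPBW p n α ∧
          f = initTerm (degRevLex (rankPBW p n)) (Dmin p n α)}) =
      initSpan (degRevLex (rankPBW p n)) (Pluecker p n) := by
  have hr := rankPBW_injective hpn
  refine le_antisymm ?_ (Submodule.span_le.2 ?_)
  · rw [Algebra.adjoin_eq_span]
    refine Submodule.span_mono fun g hg => ?_
    suffices h : ∃ f ∈ Pluecker p n, ∃ m, IsLead (rankPBW p n) f m ∧ g = monomial m (coeff m f) by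
      obtain ⟨f, hf, m, hm, rfl⟩ := h
      exact ⟨f, hf, hm.initTerm_eq hr⟩
    induction hg using Submonoid.closure_induction with
    | mem g hg =>
      obtain ⟨α, hα, rfl⟩ := hg
      have hlead := isLead_Dmin_of_isPBW hα
      exact ⟨_, Algebra.subset_adjoin ⟨α, rfl⟩, _, hlead, hlead.initTerm_eq hr⟩
    | one => exact ⟨1, one_mem _, 0, isLead_one, by simp⟩
    | mul g h _ _ hg hh =>
      obtain ⟨f, hf, m, hm, rfl⟩ := hg
      obtain ⟨f', hf', m', hm', rfl⟩ := hh
      exact ⟨f * f', mul_mem hf hf', m + m', hm.mul hr hm', by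
        rw [hm.coeff_mul hr hm', monomial_mul]⟩
  · rintro _ ⟨f, hf, rfl⟩
    exact initTerm_mem_adjoin hp hpn hf

end Sagbi

/-- The minors `D_I` with `I` a PBW tuple form a sagbi basis of the
Plücker algebra with respect to `<_pbw`: they generate `𝒫`, the initial term of `D_I`
is `z_{1,α₁}⋯z_{p,α_p}`, and these monomials generate the initial subalgebra. -/
theorem statement5 (p n : ℕ) (hp : 1 ≤ p) (hpn : p < n) :
    Algebra.adjoin ℂ {f | ∃ α : Fin p → Fin n, IsPBW p n α ∧ f = Dmin p n α} =
        Pluecker p n ∧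
      (∀ α : Fin p → Fin n, IsPBW p n α →
        initTerm (degRevLex (rankPBW p n)) (Dmin p n α) = ∏ j : Fin p, X (j, α j)) ∧
      Subalgebra.toSubmodule (Algebra.adjoin ℂ
          {f | ∃ α : Fin p → Fin n, IsPBW p n α ∧
            f = initTerm (degRevLex (rankPBW p n)) (Dmin p n α)}) =
        initSpan (degRevLex (rankPBW p n)) (Pluecker p n) := by
  refine ⟨adjoin_pbw_eq hp hpn, fun α hα => ?_, adjoin_initTerm_eq hp hpn⟩
  rw [initTerm_Dmin_of_isPBW hpn hα, permExp, monomial_sum_one]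
  rfl
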